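/- The square of the antipode of D is conjugation by g⁻¹, i.e. S²(h) = g⁻¹ h g for all h ∈ D; moreover for every finite-dimensional D-module V with representation ρ and every D-module endomorphism f of V, one has Tr(f ∘ ρ(g)) = Tr(f ∘ ρ(g⁻¹)). Hence D is a spherical Hopf algebra with pivot g⁻¹. -/

import Mathlib

open FreeAlgebra

/-- Generators of the double of the Jordan plane. -/
inductive JGen : Type
  | u | v | zeta | g | ginv | x | y

variable (k : Type) [Field k] [IsAlgClosed k] [CharZero k]

/-- The defining relations of the double of the Jordan plane. -/
inductive JRel : FreeAlgebra k JGen → FreeAlgebra k JGen → Prop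
  | gginv : JRel (ι k .g * ι k .ginv) 1
  | ginvg : JRel (ι k .ginv * ι k .g) 1
  | zg : JRel (ι k .zeta * ι k .g) (ι k .g * ι k .zeta)
  | gx : JRel (ι k .g * ι k .x) (ι k .x * ι k .g)
  | gy : JRel (ι k .g * ι k .y) (ι k .y * ι k .g + ι k .x * ι k .g)
  | zy : JRel (ι k .zeta * ι k .y) (ι k .y * ι k .zeta + ι k .y)
  | zx : JRel (ι k .zeta * ι k .x) (ι k .x * ι k .zeta + ι k .x)
  | ug : JRel (ι k .u * ι k .g) (ι k .g * ι k .u)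
  | vg : JRel (ι k .v * ι k .g) (ι k .g * ι k .v + ι k .g * ι k .u)
  | vz : JRel (ι k .v * ι k .zeta) (ι k .zeta * ι k .v + ι k .v)
  | uz : JRel (ι k .u * ι k .zeta) (ι k .zeta * ι k .u + ι k .u)
  | yx : JRel (ι k .y * ι k .x) (ι k .x * ι k .y - (1/2 : k) • (ι k .x * ι k .x))
  | vu : JRel (ι k .v * ι k .u) (ι k .u * ι k .v - (1/2 : k) • (ι k .u * ι k .u))
  | ux : JRel (ι k .u * ι k .x) (ι k .x * ι k .u)
  | vx : JRel (ι k .v * ι k .x) (ι k .x * ι k .v + (1 - ι k .g) + ι k .x * ι k .u)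
  | uy : JRel (ι k .u * ι k .y) (ι k .y * ι k .u + (1 - ι k .g))
  | vy : JRel (ι k .v * ι k .y) (ι k .y * ι k .v - ι k .g * ι k .zeta + ι k .y * ι k .u)

/-- The double of the Jordan plane, as the presented algebra. -/
def D : Type := RingQuot (JRel k)

noncomputable instance : Ring (D k) := inferInstanceAs (Ring (RingQuot (JRel k)))
noncomputable instance : Algebra k (D k) := inferInstanceAs (Algebra k (RingQuot (JRel k)))

/-- The canonical projection from the free algebra onto `D`. -/
noncomputable def Dmk : FreeAlgebra k JGen →ₐ[k] D k := RingQuot.mkAlgHom k (JRel k)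

noncomputable def DU : D k := Dmk k (ι k .u)
noncomputable def DV : D k := Dmk k (ι k .v)
noncomputable def DZ : D k := Dmk k (ι k .zeta)
noncomputable def DG : D k := Dmk k (ι k .g)
noncomputable def DGinv : D k := Dmk k (ι k .ginv)
noncomputable def DX : D k := Dmk k (ι k .x)
noncomputable def DY : D k := Dmk k (ι k .y)

set_option synthInstance.maxHeartbeats 1000000
set_option maxHeartbeats 2000000

open scoped TensorProduct

theorem aux_antipode {R A : Type} [Field R] [Ring A] [Algebra R A]
    (Δ : A →ₐ[R] A ⊗[R] A) (ε : A →ₐ[R] R) (S : A →ₗ[R] A)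
    (hcoassoc : ∀ a : A,
      TensorProduct.assoc R A A A ((Δ.toLinearMap.rTensor A) (Δ a)) =
        (Δ.toLinearMap.lTensor A) (Δ a))
    (hcounit₁ : ∀ a : A, TensorProduct.lid R A ((ε.toLinearMap.rTensor A) (Δ a)) = a)
    (hcounit₂ : ∀ a : A, TensorProduct.rid R A ((ε.toLinearMap.lTensor A) (Δ a)) = a)
    (hS₁ : ∀ a : A, LinearMap.mul' R A ((S.rTensor A) (Δ a)) = algebraMap R A (ε a))
    (hS₂ : ∀ a : A, LinearMap.mul' R A ((S.lTensor A) (Δ a)) = algebraMap R A (ε a)) :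
    S 1 = 1 ∧ ∀ a b : A, S (a * b) = S b * S a := by
  letI C : Coalgebra R A :=
    { comul := Δ.toLinearMap
      counit := ε.toLinearMap
      coassoc := LinearMap.ext hcoassoc
      rTensor_counit_comp_comul := by
        ext a
        apply (TensorProduct.lid R A).injective
        simpa using hcounit₁ a
      lTensor_counit_comp_comul := by
        ext a
        apply (TensorProduct.rid R A).injective
        simpa using hcounit₂ a }
  letI B : Bialgebra R A := Bialgebra.mk' R A (map_one ε) (fun {a b} => map_mul ε a b)
    (map_one Δ) (fun {a b} => map_mul Δ a b)
  letI H : HopfAlgebra R A :=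
    { B with
      antipode := S
      mul_antipode_rTensor_comul := LinearMap.ext hS₁
      mul_antipode_lTensor_comul := LinearMap.ext hS₂ }
  exact ⟨HopfAlgebra.antipode_one (R := R) (A := A),
    fun a b => HopfAlgebra.antipode_mul_antidistrib (R := R) a b⟩

theorem Dmk_rel {a b : FreeAlgebra k JGen} (h : JRel k a b) : Dmk k a = Dmk k b :=
  RingQuot.mkAlgHom_rel k h

theorem D_g_ginv : DG k * DGinv k = 1 := by
  simpa [DG, DGinv] using Dmk_rel k JRel.gginv

theorem D_ginv_g : DGinv k * DG k = 1 := by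
  simpa [DG, DGinv] using Dmk_rel k JRel.ginvg

theorem D_zg : DZ k * DG k = DG k * DZ k := by
  simpa [DG, DZ] using Dmk_rel k JRel.zg

theorem D_ug : DU k * DG k = DG k * DU k := by
  simpa [DG, DU] using Dmk_rel k JRel.ug

theorem D_vg : DV k * DG k = DG k * DV k + DG k * DU k := by
  simpa [DG, DU, DV] using Dmk_rel k JRel.vg

theorem D_uz : DU k * DZ k = DZ k * DU k + DU k := by
  simpa [DZ, DU] using Dmk_rel k JRel.uz

theorem D_uy : DU k * DY k = DY k * DU k + (1 - DG k) := by
  simpa [DG, DU, DY] using Dmk_rel k JRel.uy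

theorem D_ginv_u : DGinv k * DU k = DU k * DGinv k := by
  calc DGinv k * DU k = DGinv k * DU k * (DG k * DGinv k) := by rw [D_g_ginv, mul_one]
    _ = DGinv k * (DU k * DG k) * DGinv k := by noncomm_ring
    _ = (DGinv k * DG k) * DU k * DGinv k := by rw [D_ug]; noncomm_ring
    _ = DU k * DGinv k := by rw [D_ginv_g, one_mul]

/-- `g - g⁻¹` is a commutator. -/
theorem D_comm : DG k - DGinv k =
    (DY k + DGinv k * DY k) * DU k - DU k * (DY k + DGinv k * DY k) := by
  have h : DU k * (DGinv k * DY k) = DGinv k * DY k * DU k + (DGinv k - 1) := by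
    rw [← mul_assoc, ← D_ginv_u, mul_assoc, D_uy, mul_add, mul_sub, D_ginv_g, mul_one, mul_assoc]
  rw [mul_add, h, D_uy, add_mul]
  abel

theorem D_induction (P : D k → Prop) (halg : ∀ r : k, P (algebraMap k (D k) r))
    (hu : P (DU k)) (hv : P (DV k)) (hz : P (DZ k)) (hg : P (DG k)) (hgi : P (DGinv k))
    (hx : P (DX k)) (hy : P (DY k))
    (hmul : ∀ a b, P a → P b → P (a * b)) (hadd : ∀ a b, P a → P b → P (a + b)) (h : D k) :
    P h := by
  obtain ⟨a, rfl⟩ : ∃ a, Dmk k a = h := RingQuot.mkAlgHom_surjective k (JRel k) h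
  induction a using FreeAlgebra.induction with
  | grade0 r => rw [AlgHom.commutes]; exact halg r
  | grade1 j => cases j <;> assumption
  | mul a b ha hb => rw [map_mul]; exact hmul _ _ ha hb
  | add a b ha hb => rw [map_add]; exact hadd _ _ ha hb

/-- `D` is a Hopf algebra with the comultiplication `Δ` determined by
`Δ(g) = g⊗g`, `Δ(u) = u⊗1 + 1⊗u`, `Δ(ζ) = ζ⊗1 + 1⊗ζ`, `Δ(x) = x⊗1 + g⊗x`,
`Δ(y) = y⊗1 + g⊗y`, `Δ(v) = v⊗1 + 1⊗v + ζ⊗u`, the counit `ε` with `ε(g) = 1`,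
`ε(u) = ε(v) = ε(ζ) = ε(x) = ε(y) = 0`, and antipode `S`.  Then the square of the antipode
is conjugation by `g⁻¹`, i.e. `S²(h) = g⁻¹ h g` for all `h ∈ D`, and for every
finite-dimensional `D`-module `V` with representation `ρ` and every `D`-module endomorphism
`f` of `V` one has `Tr(f ∘ ρ(g)) = Tr(f ∘ ρ(g⁻¹))`.  Hence `D` is a spherical Hopf algebra
with pivot `g⁻¹`. -/
theorem D_spherical
    -- the comultiplication, an algebra map
    (Δ : D k →ₐ[k] (D k) ⊗[k] (D k))
    -- the counit, an algebra map
    (ε : D k →ₐ[k] k)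
    -- the antipode
    (S : D k →ₗ[k] D k)
    -- coassociativity
    (hcoassoc : ∀ a : D k,
      TensorProduct.assoc k (D k) (D k) (D k) ((Δ.toLinearMap.rTensor (D k)) (Δ a)) =
        (Δ.toLinearMap.lTensor (D k)) (Δ a))
    -- the counit laws
    (hcounit₁ : ∀ a : D k, TensorProduct.lid k (D k) ((ε.toLinearMap.rTensor (D k)) (Δ a)) = a)
    (hcounit₂ : ∀ a : D k, TensorProduct.rid k (D k) ((ε.toLinearMap.lTensor (D k)) (Δ a)) = a)
    -- the antipode axioms
    (hS₁ : ∀ a : D k,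
      LinearMap.mul' k (D k) ((S.rTensor (D k)) (Δ a)) = algebraMap k (D k) (ε a))
    (hS₂ : ∀ a : D k,
      LinearMap.mul' k (D k) ((S.lTensor (D k)) (Δ a)) = algebraMap k (D k) (ε a))
    -- the values of the comultiplication on the generators
    (hΔg : Δ (DG k) = DG k ⊗ₜ[k] DG k)
    (hΔginv : Δ (DGinv k) = DGinv k ⊗ₜ[k] DGinv k)
    (hΔu : Δ (DU k) = DU k ⊗ₜ[k] 1 + 1 ⊗ₜ[k] DU k)
    (hΔζ : Δ (DZ k) = DZ k ⊗ₜ[k] 1 + 1 ⊗ₜ[k] DZ k)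
    (hΔx : Δ (DX k) = DX k ⊗ₜ[k] 1 + DG k ⊗ₜ[k] DX k)
    (hΔy : Δ (DY k) = DY k ⊗ₜ[k] 1 + DG k ⊗ₜ[k] DY k)
    (hΔv : Δ (DV k) = DV k ⊗ₜ[k] 1 + 1 ⊗ₜ[k] DV k + DZ k ⊗ₜ[k] DU k)
    -- the values of the counit on the generators
    (hεg : ε (DG k) = 1) (hεginv : ε (DGinv k) = 1) (hεu : ε (DU k) = 0)
    (hεζ : ε (DZ k) = 0) (hεx : ε (DX k) = 0) (hεy : ε (DY k) = 0) (hεv : ε (DV k) = 0) :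
    (∀ h : D k, S (S h) = DGinv k * h * DG k) ∧
    (∀ (V : Type) (_ : AddCommGroup V) (_ : Module k V) (_ : Module (D k) V)
        (_ : IsScalarTower k (D k) V) (_ : FiniteDimensional k V) (f : V →ₗ[D k] V),
      LinearMap.trace k V
          ((f.restrictScalars k) ∘ₗ (Module.toModuleEnd k V (DG k) : V →ₗ[k] V)) =
        LinearMap.trace k V
          ((f.restrictScalars k) ∘ₗ (Module.toModuleEnd k V (DGinv k) : V →ₗ[k] V))) := by
  obtain ⟨S1, Smul⟩ := aux_antipode Δ ε S hcoassoc hcounit₁ hcounit₂ hS₁ hS₂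
  refine ⟨?_, ?_⟩
  · have e1 := D_g_ginv k
    have e2 := D_ginv_g k
    have sg : S (DG k) = DGinv k := by
      have h := hS₁ (DG k)
      rw [hΔg, hεg, LinearMap.rTensor_tmul, LinearMap.mul'_apply, map_one] at h
      calc S (DG k) = S (DG k) * DG k * DGinv k := by rw [mul_assoc, e1, mul_one]
        _ = DGinv k := by rw [h, one_mul]
    have sgi : S (DGinv k) = DG k := by
      have h := hS₁ (DGinv k)
      rw [hΔginv, hεginv, LinearMap.rTensor_tmul, LinearMap.mul'_apply, map_one] at h
      calc S (DGinv k) = S (DGinv k) * DGinv k * DG k := by rw [mul_assoc, e2, mul_one]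
        _ = DG k := by rw [h, one_mul]
    have su : S (DU k) = - DU k := by
      have h := hS₁ (DU k)
      rw [hΔu, hεu, map_add, map_add, LinearMap.rTensor_tmul, LinearMap.rTensor_tmul,
        LinearMap.mul'_apply, LinearMap.mul'_apply, map_zero, S1, mul_one, one_mul] at h
      exact eq_neg_of_add_eq_zero_left h
    have sz : S (DZ k) = - DZ k := by
      have h := hS₁ (DZ k)
      rw [hΔζ, hεζ, map_add, map_add, LinearMap.rTensor_tmul, LinearMap.rTensor_tmul,
        LinearMap.mul'_apply, LinearMap.mul'_apply, map_zero, S1, mul_one, one_mul] at h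
      exact eq_neg_of_add_eq_zero_left h
    have sx : S (DX k) = - (DGinv k * DX k) := by
      have h := hS₁ (DX k)
      rw [hΔx, hεx, map_add, map_add, LinearMap.rTensor_tmul, LinearMap.rTensor_tmul,
        LinearMap.mul'_apply, LinearMap.mul'_apply, map_zero, sg, mul_one] at h
      exact eq_neg_of_add_eq_zero_left h
    have sy : S (DY k) = - (DGinv k * DY k) := by
      have h := hS₁ (DY k)
      rw [hΔy, hεy, map_add, map_add, LinearMap.rTensor_tmul, LinearMap.rTensor_tmul,
        LinearMap.mul'_apply, LinearMap.mul'_apply, map_zero, sg, mul_one] at h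
      exact eq_neg_of_add_eq_zero_left h
    have sv : S (DV k) = - DV k + DZ k * DU k := by
      have h := hS₁ (DV k)
      rw [hΔv, hεv, map_add, map_add, map_add, map_add, LinearMap.rTensor_tmul,
        LinearMap.rTensor_tmul, LinearMap.rTensor_tmul,
        LinearMap.mul'_apply, LinearMap.mul'_apply, LinearMap.mul'_apply, map_zero, S1, sz,
        mul_one, one_mul, neg_mul] at h
      rw [← sub_eq_zero, ← h]
      abel
    intro h
    induction h using D_induction with
    | halg r =>
      rw [Algebra.algebraMap_eq_smul_one, map_smul, map_smul, S1, S1, mul_smul_comm, mul_one,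
        smul_mul_assoc, e2]
    | hu => rw [su, map_neg, su, neg_neg, mul_assoc, D_ug, ← mul_assoc, e2, one_mul]
    | hv =>
      rw [sv, map_add, map_neg, sv, Smul, su, sz, neg_mul_neg, D_uz, mul_assoc, D_vg, mul_add,
        ← mul_assoc, ← mul_assoc, e2, one_mul, one_mul]
      abel
    | hz => rw [sz, map_neg, sz, neg_neg, mul_assoc, D_zg, ← mul_assoc, e2, one_mul]
    | hg => rw [sg, sgi, e2, one_mul]
    | hgi => rw [sgi, sg, mul_assoc, e2, mul_one]
    | hx => rw [sx, map_neg, Smul, sx, sgi, neg_mul, neg_neg]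
    | hy => rw [sy, map_neg, Smul, sy, sgi, neg_mul, neg_neg]
    | hmul a b ha hb =>
      rw [Smul, Smul, ha, hb]
      calc DGinv k * a * DG k * (DGinv k * b * DG k)
          = DGinv k * a * (DG k * DGinv k) * b * DG k := by noncomm_ring
        _ = DGinv k * (a * b) * DG k := by rw [e1]; noncomm_ring
    | hadd a b ha hb => rw [map_add, map_add, ha, hb, mul_add, add_mul]
  · intro V _ _ _ _ _ f
    let ρ : D k → (V →ₗ[k] V) := fun a => Module.toModuleEnd k V a
    have hρ : ∀ a v, ρ a v = a • v := fun a v => rfl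
    let F : V →ₗ[k] V := f.restrictScalars k
    have hF : ∀ v, F v = f v := fun v => rfl
    let w : D k := DY k + DGinv k * DY k
    have key : F ∘ₗ ρ (DG k) - F ∘ₗ ρ (DGinv k)
        = (F ∘ₗ ρ w) ∘ₗ ρ (DU k) - ρ (DU k) ∘ₗ (F ∘ₗ ρ w) := by
      ext v
      simp only [LinearMap.sub_apply, LinearMap.comp_apply, hρ, hF]
      rw [← map_smul f, ← map_sub, ← map_sub, ← sub_smul, D_comm, sub_smul, mul_smul, mul_smul]
    have := congrArg (LinearMap.trace k V) key
    rw [map_sub, map_sub, LinearMap.trace_comp_comm' (F ∘ₗ ρ w) (ρ (DU k)), sub_self] at this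
    exact sub_eq_zero.mp this
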